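/- arXiv:1011.1395 — 5 statements merged into one kernel-verified Lean document; each statement's English description precedes it below -/
import Mathlib

section
/- Let q ≥ 2 be an integer with q ≡ 2 (mod 3), let N ≥ 1 be an integer, and set θ = 3^N ∈ ℚ_3. Then θ² − 2θ − 4q + 1 is not a square in ℚ_3, and consequently the quadratic equation x² + (2θ − θ² + 2q − 1)x + q² = 0 has no solution in ℚ_3. -/
/-!
The discriminant of the quadratic is `(θ - 1)² D` with `D = θ² - 2θ - 4q + 1`, so a root forces `D`
to be a square. Because `ℤ_[3]` is integrally closed, `D` is then already a square in `ℤ_[3]`, and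
so is its reduction modulo `3`. As `3 ∣ θ`, that reduction is `1 - 4q = 2`, which is not a square.
The same argument works for any integrally closed ring and any reduction map that kills `θ`.
-/

theorem isSquare_algebraMap_iff {R A : Type*} [CommRing R] [CommRing A] [Algebra R A]
    [IsIntegrallyClosedIn R A] {a : R} : IsSquare (algebraMap R A a) ↔ IsSquare a := by
  refine ⟨fun ⟨r, hr⟩ ↦ ?_, IsSquare.map (algebraMap R A)⟩
  have r_sq_integral : IsIntegral R (r ^ 2) := by
    rw [sq, ← hr]
    exact isIntegral_algebraMap
  obtain ⟨b, rfl⟩ := IsIntegrallyClosedIn.exists_algebraMap_eq_of_isIntegral_pow two_pos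
    r_sq_integral
  rw [← map_mul] at hr
  exact ⟨b, IsIntegralClosure.algebraMap_injective R R A hr⟩

theorem not_isSquare_algebraMap_of_not_isSquare_map {R A S : Type*} [CommRing R] [CommRing A]
    [Algebra R A] [IsIntegrallyClosedIn R A] [Semiring S] (f : R →+* S) {a : R}
    (ha : ¬ IsSquare (f a)) : ¬ IsSquare (algebraMap R A a) :=
  fun h ↦ ha ((isSquare_algebraMap_iff.mp h).map f)

theorem discrim_potts_quadratic {R : Type*} [CommRing R] (θ q : R) :
    discrim 1 (2 * θ - θ ^ 2 + 2 * q - 1) (q ^ 2) =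
      (θ - 1) ^ 2 * (θ ^ 2 - 2 * θ - 4 * q + 1) := by
  rw [discrim]
  ring

theorem isSquare_of_sq_mul_eq_sq {K : Type*} [Field K] {a b c : K} (ha : a ≠ 0)
    (h : a ^ 2 * b = c ^ 2) : IsSquare b := by
  rw [mul_comm] at h
  rw [eq_div_of_mul_eq (pow_ne_zero 2 ha) h]
  exact (IsSquare.sq c).div (IsSquare.sq a)

theorem isSquare_of_potts_quadratic_eq_zero {K : Type*} [Field K] {θ q x : K} (hθ : θ ≠ 1)
    (hx : x ^ 2 + (2 * θ - θ ^ 2 + 2 * q - 1) * x + q ^ 2 = 0) :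
    IsSquare (θ ^ 2 - 2 * θ - 4 * q + 1) := by
  rw [sq x, ← one_mul (x * x)] at hx
  have discrim_eq_sq := discrim_eq_sq_of_quadratic_eq_zero hx
  rw [discrim_potts_quadratic] at discrim_eq_sq
  exact isSquare_of_sq_mul_eq_sq (sub_ne_zero.mpr hθ) discrim_eq_sq

theorem stmt_4_general {R K S : Type*} [CommRing R] [Field K] [Algebra R K]
    [IsIntegrallyClosedIn R K] [Ring S] (f : R →+* S) {θ q : R} (hθ : f θ = 0)
    (hq : ¬ IsSquare (1 - 4 * f q)) :
    ¬ IsSquare (algebraMap R K θ ^ 2 - 2 * algebraMap R K θ - 4 * algebraMap R K q + 1) ∧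
    ¬ ∃ x : K, x ^ 2 + (2 * algebraMap R K θ - algebraMap R K θ ^ 2
      + 2 * algebraMap R K q - 1) * x + algebraMap R K q ^ 2 = 0 := by
  have reduction_eq : f (θ ^ 2 - 2 * θ - 4 * q + 1) = 1 - 4 * f q := by
    simp only [map_add, map_sub, map_mul, map_pow, map_ofNat, map_one, hθ]
    noncomm_ring
  have not_square : ¬ IsSquare
      (algebraMap R K θ ^ 2 - 2 * algebraMap R K θ - 4 * algebraMap R K q + 1) := by
    rw [← reduction_eq] at hq
    simpa only [map_add, map_sub, map_mul, map_pow, map_ofNat, map_one] using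
      not_isSquare_algebraMap_of_not_isSquare_map (A := K) f hq
  have θ_ne_one : algebraMap R K θ ≠ 1 := by
    intro h
    have θ_eq_one : θ = 1 :=
      IsIntegralClosure.algebraMap_injective R R K (h.trans (map_one _).symm)
    have one_eq_zero : (1 : S) = 0 := by rw [← hθ, θ_eq_one, map_one]
    exact hq ⟨0, eq_of_zero_eq_one one_eq_zero.symm _ _⟩
  exact ⟨not_square, fun ⟨_, hx⟩ ↦ not_square (isSquare_of_potts_quadratic_eq_zero θ_ne_one hx)⟩

theorem not_isSquare_one_sub_four_mul_of_mod_three_eq_two {q : ℕ} (hq : q % 3 = 2) :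
    ¬ IsSquare (1 - 4 * (q : ZMod 3)) := by
  rw [show (q : ZMod 3) = (2 : ℕ) from (ZMod.natCast_eq_natCast_iff q 2 3).mpr hq]
  decide

theorem stmt_4 (q : ℕ) (hq : 2 ≤ q) (hq3 : q % 3 = 2)
    (N : ℕ) (hN : 1 ≤ N) (θ : ℚ_[3]) (hθ : θ = (3 : ℚ_[3]) ^ N) :
    ¬ IsSquare (θ ^ 2 - 2 * θ - 4 * q + 1) ∧
    ¬ ∃ x : ℚ_[3], x ^ 2 + (2 * θ - θ ^ 2 + 2 * q - 1) * x + q ^ 2 = 0 := by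
  have three_pow_reduces_to_zero : PadicInt.toZMod ((3 : ℤ_[3]) ^ N) = 0 := by
    rw [map_pow, map_ofNat]
    exact zero_pow (Nat.one_le_iff_ne_zero.mp hN)
  have q_reduction : ¬ IsSquare (1 - 4 * PadicInt.toZMod (q : ℤ_[3])) := by
    rw [map_natCast]
    exact not_isSquare_one_sub_four_mul_of_mod_three_eq_two hq3
  simpa only [hθ, map_pow, map_ofNat, map_natCast] using
    stmt_4_general (K := ℚ_[3]) PadicInt.toZMod three_pow_reduces_to_zero q_reduction
end

section
/- Let p be an odd prime, let q ≥ 2 be an integer divisible by p, let N ≥ 1 be an integer, set θ = p^N ∈ ℚ_p, and assume ‖θ‖_p ≤ ‖q‖_p². Let x₁ and x₂ be roots in ℚ_p of x² + (2θ − θ² + 2q − 1)x + q² = 0 with ‖x₁‖_p = ‖q‖_p² and ‖x₂‖_p = 1. Then, for the map f(x) = ((θx + q)/(x + θ + q − 1))², the norms of the derivative of f at its fixed points satisfy: ‖deriv f 1‖_p = ‖q‖_p⁻¹ > 1, ‖deriv f x₁‖_p = ‖q‖_p² < 1, and ‖deriv f x₂‖_p = ‖q‖_p⁻¹ > 1;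 in particular x₁ is an attractive fixed point and 1, x₂ are repelling fixed points. -/
/-!
For `f x = ((θ x + q) / D) ^ k` with `D = x + θ + q - 1`, the chain rule gives
`f' x = k * ((θ x + q) / D) ^ (k - 1) * ((θ - 1) (θ + q) / D ^ 2)`. In an ultrametric field with
`‖θ‖ < ‖q‖ < 1`, every factor except `D` has a constant norm on the closed unit ball. If `‖x‖ < 1`,
the term `-1` dominates `D`, so `‖D‖ = 1`. If `x = f x` has norm one, as is the case for `x = 1`,
taking norms in the fixed-point equation gives `‖D‖ = ‖q‖` instead.
-/

open Function

/-- The Potts–Bethe mapping with `k`-th powers, arising from the `(q + 1)`-state Potts model on the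
Cayley tree of order `k`. Division by zero gives it the value `0 ^ k` at the pole `1 - θ - q`. -/
def pottsBethe {𝕜 : Type*} [Field 𝕜] (θ q : 𝕜) (k : ℕ) (x : 𝕜) : 𝕜 :=
  ((θ * x + q) / (x + θ + q - 1)) ^ k

section Field

variable {𝕜 : Type*} [Field 𝕜] {θ q x : 𝕜}

lemma isFixedPt_pottsBethe_one (h : θ + q ≠ 0) (k : ℕ) : IsFixedPt (pottsBethe θ q k) 1 := by
  have hD : 1 + θ + q - 1 = θ + q := by ring
  rw [IsFixedPt, pottsBethe, mul_one, hD, div_self h, one_pow]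

lemma isFixedPt_pottsBethe_two_of_quadratic (hnum : θ * x + q ≠ 0)
    (hx : x ^ 2 + (2 * θ - θ ^ 2 + 2 * q - 1) * x + q ^ 2 = 0) :
    IsFixedPt (pottsBethe θ q 2) x := by
  have hcleared : (θ * x + q) ^ 2 = x * (x + θ + q - 1) ^ 2 := by
    linear_combination (1 - x) * hx
  have hD : (x + θ + q - 1) ^ 2 ≠ 0 :=
    right_ne_zero_of_mul (hcleared ▸ pow_ne_zero 2 hnum)
  rwa [IsFixedPt, pottsBethe, div_pow, div_eq_iff hD]

end Field

lemma hasDerivAt_pottsBethe {𝕜 : Type*} [NontriviallyNormedField 𝕜] {θ q x : 𝕜}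
    (hD : x + θ + q - 1 ≠ 0) (k : ℕ) :
    HasDerivAt (pottsBethe θ q k)
      (k * ((θ * x + q) / (x + θ + q - 1)) ^ (k - 1) *
        ((θ - 1) * (θ + q) / (x + θ + q - 1) ^ 2)) x := by
  have hnum : HasDerivAt (fun y ↦ θ * y + q) θ x := by
    simpa using ((hasDerivAt_id x).const_mul θ).add_const q
  have hden : HasDerivAt (fun y ↦ y + θ + q - 1) 1 x :=
    (((hasDerivAt_id x).add_const θ).add_const q).sub_const 1
  refine ((hnum.fun_div hden hD).fun_pow k).congr_deriv ?_
  congr 2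
  ring

lemma norm_add_eq_right_of_norm_lt {E : Type*} [SeminormedAddGroup E] [IsUltrametricDist E]
    {x y : E} (h : ‖x‖ < ‖y‖) : ‖x + y‖ = ‖y‖ := by
  rw [IsUltrametricDist.norm_add_eq_max_of_norm_ne_norm h.ne, max_eq_right h.le]

section NormedField

variable {𝕜 : Type*} [NormedField 𝕜] [IsUltrametricDist 𝕜] {θ q x : 𝕜}

lemma norm_sub_one_of_norm_lt_one (hx : ‖x‖ < 1) : ‖x - 1‖ = 1 := by
  have hneg : ‖(-1 : 𝕜)‖ = 1 := by rw [norm_neg, norm_one]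
  rw [sub_eq_add_neg, norm_add_eq_right_of_norm_lt (hx.trans_eq hneg.symm), hneg]

lemma norm_mul_add_of_norm_lt (hθ : ‖θ‖ < ‖q‖) (hx : ‖x‖ ≤ 1) : ‖θ * x + q‖ = ‖q‖ := by
  apply norm_add_eq_right_of_norm_lt
  calc ‖θ * x‖ = ‖θ‖ * ‖x‖ := norm_mul θ x
    _ ≤ ‖θ‖ := mul_le_of_le_one_right (norm_nonneg θ) hx
    _ < ‖q‖ := hθ

lemma norm_pottsBethe_denom_of_norm_lt_one (hθ : ‖θ‖ < 1) (hq : ‖q‖ < 1) (hx : ‖x‖ < 1) :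
    ‖x + θ + q - 1‖ = 1 := by
  have hxθ : ‖x + θ‖ < 1 := (IsUltrametricDist.norm_add_le_max x θ).trans_lt (max_lt hx hθ)
  exact norm_sub_one_of_norm_lt_one
    ((IsUltrametricDist.norm_add_le_max (x + θ) q).trans_lt (max_lt hxθ hq))

lemma norm_pottsBethe_denom_of_isFixedPt {k : ℕ} (hk : k ≠ 0) (hθ : ‖θ‖ < ‖q‖) (hx : ‖x‖ = 1)
    (hfix : IsFixedPt (pottsBethe θ q k) x) : ‖x + θ + q - 1‖ = ‖q‖ := by
  have hpow : (‖q‖ / ‖x + θ + q - 1‖) ^ k = 1 := by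
    rw [← norm_mul_add_of_norm_lt hθ hx.le, ← norm_div, ← norm_pow, ← hx]
    exact congrArg norm hfix
  have hratio : ‖q‖ / ‖x + θ + q - 1‖ = 1 := (pow_eq_one_iff_of_nonneg (by positivity) hk).mp hpow
  exact (eq_of_div_eq_one hratio).symm

end NormedField

section Derivative

variable {𝕜 : Type*} [NontriviallyNormedField 𝕜] [IsUltrametricDist 𝕜] {θ q x : 𝕜} {k : ℕ}

lemma norm_deriv_pottsBethe (hθ : ‖θ‖ < ‖q‖) (hq : ‖q‖ < 1) (hx : ‖x‖ ≤ 1)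
    (hD : x + θ + q - 1 ≠ 0) :
    ‖deriv (pottsBethe θ q k) x‖ =
      ‖(k : 𝕜)‖ * (‖q‖ / ‖x + θ + q - 1‖) ^ (k - 1) * (‖q‖ / ‖x + θ + q - 1‖ ^ 2) := by
  rw [(hasDerivAt_pottsBethe hD k).deriv]
  simp only [norm_mul, norm_div, norm_pow, norm_mul_add_of_norm_lt hθ hx,
    norm_sub_one_of_norm_lt_one (hθ.trans hq), norm_add_eq_right_of_norm_lt hθ, one_mul]

lemma norm_deriv_pottsBethe_of_norm_lt_one (hk : k ≠ 0) (hθ : ‖θ‖ < ‖q‖) (hq : ‖q‖ < 1)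
    (hx : ‖x‖ < 1) : ‖deriv (pottsBethe θ q k) x‖ = ‖(k : 𝕜)‖ * ‖q‖ ^ k := by
  have hD := norm_pottsBethe_denom_of_norm_lt_one (hθ.trans hq) hq hx
  rw [norm_deriv_pottsBethe hθ hq hx.le (norm_ne_zero_iff.mp (hD ▸ one_ne_zero)), hD, one_pow,
    div_one, mul_assoc, pow_sub_one_mul hk]

lemma norm_deriv_pottsBethe_of_isFixedPt (hk : k ≠ 0) (hθ : ‖θ‖ < ‖q‖) (hq : ‖q‖ < 1)
    (hx : ‖x‖ = 1) (hfix : IsFixedPt (pottsBethe θ q k) x) :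
    ‖deriv (pottsBethe θ q k) x‖ = ‖(k : 𝕜)‖ * ‖q‖⁻¹ := by
  have hD := norm_pottsBethe_denom_of_isFixedPt hk hθ hx hfix
  have hq0 : ‖q‖ ≠ 0 := ((norm_nonneg θ).trans_lt hθ).ne'
  rw [norm_deriv_pottsBethe hθ hq hx.le (norm_ne_zero_iff.mp (hD ▸ hq0)), hD, div_self hq0,
    one_pow, mul_one, sq, div_self_mul_self']

theorem stmt_8_general {x₁ x₂ : 𝕜} (hq : ‖q‖ < ‖(k : 𝕜)‖) (hθ : ‖θ‖ < ‖q‖) (hn₁ : ‖x₁‖ < 1)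
    (hn₂ : ‖x₂‖ = 1) (hfix : IsFixedPt (pottsBethe θ q k) x₂) :
    (‖deriv (pottsBethe θ q k) 1‖ = ‖(k : 𝕜)‖ * ‖q‖⁻¹ ∧ 1 < ‖deriv (pottsBethe θ q k) 1‖) ∧
    (‖deriv (pottsBethe θ q k) x₁‖ = ‖(k : 𝕜)‖ * ‖q‖ ^ k ∧
      ‖deriv (pottsBethe θ q k) x₁‖ < 1) ∧
    (‖deriv (pottsBethe θ q k) x₂‖ = ‖(k : 𝕜)‖ * ‖q‖⁻¹ ∧
      1 < ‖deriv (pottsBethe θ q k) x₂‖) := by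
  have hk1 : ‖(k : 𝕜)‖ ≤ 1 := IsUltrametricDist.norm_natCast_le_one 𝕜 k
  have hq1 : ‖q‖ < 1 := hq.trans_le hk1
  have hq0 : 0 < ‖q‖ := (norm_nonneg θ).trans_lt hθ
  have hk : k ≠ 0 := by
    rintro rfl
    exact (norm_nonneg q).not_gt (by simpa using hq)
  have repelling {x : 𝕜} (hx : ‖x‖ = 1) (hfix : IsFixedPt (pottsBethe θ q k) x) :
      ‖deriv (pottsBethe θ q k) x‖ = ‖(k : 𝕜)‖ * ‖q‖⁻¹ ∧
        1 < ‖deriv (pottsBethe θ q k) x‖ := by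
    have hderiv := norm_deriv_pottsBethe_of_isFixedPt hk hθ hq1 hx hfix
    exact ⟨hderiv, by rwa [hderiv, ← div_eq_mul_inv, one_lt_div hq0]⟩
  have hone : IsFixedPt (pottsBethe θ q k) 1 := isFixedPt_pottsBethe_one
    (norm_pos_iff.mp (hq0.trans_eq (norm_add_eq_right_of_norm_lt hθ).symm)) k
  have hderiv₁ := norm_deriv_pottsBethe_of_norm_lt_one hk hθ hq1 hn₁
  have hattr : ‖(k : 𝕜)‖ * ‖q‖ ^ k < 1 := mul_lt_one_of_nonneg_of_lt_one_right hk1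
    (by positivity) (pow_lt_one₀ hq0.le hq1 hk)
  exact ⟨repelling norm_one hone, ⟨hderiv₁, hderiv₁.trans_lt hattr⟩, repelling hn₂ hfix⟩

end Derivative

lemma norm_natCast_two_padic {p : ℕ} [Fact p.Prime] (hp : p ≠ 2) : ‖((2 : ℕ) : ℚ_[p])‖ = 1 :=
  Padic.norm_natCast_eq_one_iff.mpr ((Nat.coprime_primes Fact.out Nat.prime_two).mpr hp)

theorem stmt_8 (p : ℕ) [Fact p.Prime] (hp2 : p ≠ 2)
    (q : ℕ) (hq : 2 ≤ q) (hpq : p ∣ q)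
    (N : ℕ) (hN : 1 ≤ N) (θ : ℚ_[p]) (hθ : θ = (p : ℚ_[p]) ^ N)
    (hθq : ‖θ‖ ≤ ‖(q : ℚ_[p])‖ ^ 2)
    (x₁ x₂ : ℚ_[p])
    (h₁ : x₁ ^ 2 + (2 * θ - θ ^ 2 + 2 * q - 1) * x₁ + q ^ 2 = 0)
    (h₂ : x₂ ^ 2 + (2 * θ - θ ^ 2 + 2 * q - 1) * x₂ + q ^ 2 = 0)
    (hn₁ : ‖x₁‖ = ‖(q : ℚ_[p])‖ ^ 2) (hn₂ : ‖x₂‖ = 1)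
    (f : ℚ_[p] → ℚ_[p])
    (hf : f = fun x => ((θ * x + q) / (x + θ + q - 1)) ^ 2) :
    (‖deriv f 1‖ = ‖(q : ℚ_[p])‖⁻¹ ∧ 1 < ‖deriv f 1‖) ∧
    (‖deriv f x₁‖ = ‖(q : ℚ_[p])‖ ^ 2 ∧ ‖deriv f x₁‖ < 1) ∧
    (‖deriv f x₂‖ = ‖(q : ℚ_[p])‖⁻¹ ∧ 1 < ‖deriv f x₂‖) := by
  have hk : ‖((2 : ℕ) : ℚ_[p])‖ = 1 := norm_natCast_two_padic hp2
  have hq1 : ‖(q : ℚ_[p])‖ < 1 := Padic.norm_natCast_lt_one_iff.mpr hpq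
  have hq0 : 0 < ‖(q : ℚ_[p])‖ := norm_pos_iff.mpr (Nat.cast_ne_zero.mpr (by lia))
  have hsq : ‖(q : ℚ_[p])‖ ^ 2 < ‖(q : ℚ_[p])‖ := pow_lt_self_of_lt_one₀ hq0 hq1 one_lt_two
  have hθ_lt : ‖θ‖ < ‖(q : ℚ_[p])‖ := hθq.trans_lt hsq
  have hfix : IsFixedPt (pottsBethe θ (q : ℚ_[p]) 2) x₂ := isFixedPt_pottsBethe_two_of_quadratic
    (norm_pos_iff.mp (hq0.trans_eq (norm_mul_add_of_norm_lt hθ_lt hn₂.le).symm)) h₂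
  obtain rfl : f = pottsBethe θ (q : ℚ_[p]) 2 := hf
  simpa only [hk, one_mul] using
    stmt_8_general (hq1.trans_eq hk.symm) hθ_lt (hn₁.trans_lt (hsq.trans hq1)) hn₂ hfix
end

section
/- Let p be an odd prime, let q ≥ 2 be an integer divisible by p, let N ≥ 1 be an integer, set θ = p^N ∈ ℚ_p, and assume ‖θ‖_p ≤ ‖q‖_p². Let x₁ be a root in ℚ_p of x² + (2θ − θ² + 2q − 1)x + q² = 0 with ‖x₁‖_p = ‖q‖_p². Then for every x ∈ ℚ_p such that either ‖x‖_p ≠ 1, or ‖x‖_p = 1 and ‖x − 1‖_p > ‖q‖_p, the sequence of iterates f^[n](x) converges to x₁ as n → ∞ (in the topology of ℚ_p), where f(x) = ((θx + q)/(x + θ + q − 1))². -/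
/-!
Here `‖θ‖ < 1` and `‖θ + q‖ < 1`. Writing the base of `f` as
`(θ(x - 1) + (θ + q)) / ((x - 1) + (θ + q))`, the ultrametric inequality shows that `f` sends every
`x` with `‖θ + q‖ < ‖x - 1‖` into the open unit ball: for such `x` the denominator has norm
`‖x - 1‖`. On the unit ball the denominator has norm `1`, and this Möbius transformation has
determinant `(θ - 1)(θ + q)`, of norm `‖θ + q‖`; since powers are `1`-Lipschitz on the unit ball,
`f` contracts it by the factor `‖θ + q‖`. Hence these orbits converge to the fixed point in the
unit ball.
-/

open Filter Function Metric Set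
open scoped NNReal Topology

lemma tendsto_iterate_of_lipschitzOnWith {α : Type*} [PseudoMetricSpace α] {K : ℝ≥0} {f : α → α}
    {s : Set α} {a x : α} (hK : K < 1) (hf : LipschitzOnWith K f s) (hs : MapsTo f s s)
    (ha : a ∈ s) (hfa : IsFixedPt f a) (hx : x ∈ s) :
    Tendsto (fun n => f^[n] x) atTop (𝓝 a) := by
  have dist_le (n : ℕ) : dist (f^[n] x) a ≤ K ^ n * dist x a := by
    induction n with
    | zero => simp
    | succ n ih =>
      calc dist (f^[n + 1] x) a = dist (f (f^[n] x)) (f a) := by rw [iterate_succ_apply', hfa]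
        _ ≤ K * dist (f^[n] x) a := hf.dist_le_mul _ (hs.iterate n hx) _ ha
        _ ≤ K * (K ^ n * dist x a) := by gcongr
        _ = K ^ (n + 1) * dist x a := by ring
  refine tendsto_iff_dist_tendsto_zero.2 (squeeze_zero (fun _ => dist_nonneg) dist_le ?_)
  simpa using (tendsto_pow_atTop_nhds_zero_of_lt_one K.coe_nonneg hK).mul_const (dist x a)

section UltrametricRing

variable {R : Type*} [SeminormedRing R] [NormOneClass R] [IsUltrametricDist R]

lemma norm_sub_one_eq_max {x : R} (hx : ‖x‖ ≠ 1) : ‖x - 1‖ = max ‖x‖ 1 := by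
  have h := IsUltrametricDist.norm_add_eq_max_of_norm_ne_norm (x := x) (y := -1) (by simpa using hx)
  rwa [← sub_eq_add_neg, norm_neg, norm_one] at h

lemma one_le_norm_sub_one {x : R} (hx : ‖x‖ ≠ 1) : 1 ≤ ‖x - 1‖ :=
  norm_sub_one_eq_max hx ▸ le_max_right _ _

lemma norm_sub_one_eq_one {x : R} (hx : ‖x‖ < 1) : ‖x - 1‖ = 1 :=
  (norm_sub_one_eq_max hx.ne).trans (max_eq_right hx.le)

lemma norm_pow_sub_pow_le_norm_sub {a b : R} (ha : ‖a‖ ≤ 1) (hb : ‖b‖ ≤ 1) (k : ℕ) :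
    ‖a ^ k - b ^ k‖ ≤ ‖a - b‖ := by
  induction k with
  | zero => simp
  | succ k ih =>
    have hbk : ‖b ^ k‖ ≤ 1 := (norm_pow_le b k).trans (pow_le_one₀ (norm_nonneg b) hb)
    have left_le : ‖a * (a ^ k - b ^ k)‖ ≤ ‖a - b‖ :=
      (norm_mul_le _ _).trans ((mul_le_of_le_one_left (norm_nonneg _) ha).trans ih)
    have right_le : ‖(a - b) * b ^ k‖ ≤ ‖a - b‖ :=
      (norm_mul_le _ _).trans (mul_le_of_le_one_right (norm_nonneg _) hbk)
    calc ‖a ^ (k + 1) - b ^ (k + 1)‖ = ‖a * (a ^ k - b ^ k) + (a - b) * b ^ k‖ := by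
          rw [pow_succ', pow_succ']; noncomm_ring
      _ ≤ ‖a - b‖ := (IsUltrametricDist.norm_add_le_max _ _).trans (max_le left_le right_le)

end UltrametricRing

/-- The Möbius transformation underlying the recursion of the `(q + 1)`-state Potts model on a
Cayley tree, with the value `0` at its pole. -/
def pottsRatio {K : Type*} [Field K] (θ q x : K) : K := (θ * x + q) / (x + θ + q - 1)

/-- The Potts recursion for the Cayley tree of order `k`, each of the `k` successors of a vertex
contributing one factor. -/
def pottsMap {K : Type*} [Field K] (k : ℕ) (θ q x : K) : K := pottsRatio θ q x ^ k

section Field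

variable {K : Type*} [Field K] {θ q : K}

lemma pottsRatio_sub_pottsRatio {x y : K} (hx : x + θ + q - 1 ≠ 0) (hy : y + θ + q - 1 ≠ 0) :
    pottsRatio θ q x - pottsRatio θ q y =
      (θ - 1) * (θ + q) * (x - y) / ((x + θ + q - 1) * (y + θ + q - 1)) := by
  rw [pottsRatio, pottsRatio, div_sub_div _ _ hx hy]
  congr 1
  ring

lemma isFixedPt_pottsMap_two_iff {x : K} (hx : x + θ + q - 1 ≠ 0) :
    IsFixedPt (pottsMap 2 θ q) x ↔
      x = 1 ∨ x ^ 2 + (2 * θ - θ ^ 2 + 2 * q - 1) * x + q ^ 2 = 0 := by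
  have factorization : x * (x + θ + q - 1) ^ 2 - (θ * x + q) ^ 2 =
      (x - 1) * (x ^ 2 + (2 * θ - θ ^ 2 + 2 * q - 1) * x + q ^ 2) := by ring
  rw [IsFixedPt, pottsMap, pottsRatio, div_pow, div_eq_iff (pow_ne_zero 2 hx), eq_comm,
    ← sub_eq_zero, factorization, mul_eq_zero, sub_eq_zero]

end Field

section UltrametricField

variable {K : Type*} [NormedField K] [IsUltrametricDist K] {θ q : K}

lemma norm_pottsRatio_denom {x : K} (hx : ‖θ + q‖ < ‖x - 1‖) :
    ‖x + θ + q - 1‖ = ‖x - 1‖ := by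
  rw [show x + θ + q - 1 = (x - 1) + (θ + q) by ring,
    IsUltrametricDist.norm_add_eq_max_of_norm_ne_norm hx.ne', max_eq_left hx.le]

lemma norm_pottsRatio_denom_of_norm_lt_one {x : K} (hq : ‖θ + q‖ < 1) (hx : ‖x‖ < 1) :
    ‖x + θ + q - 1‖ = 1 := by
  rw [norm_pottsRatio_denom (norm_sub_one_eq_one hx ▸ hq), norm_sub_one_eq_one hx]

lemma pottsRatio_denom_ne_zero {x : K} (hq : ‖θ + q‖ < 1) (hx : ‖x‖ < 1) :
    x + θ + q - 1 ≠ 0 :=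
  norm_ne_zero_iff.1 (norm_pottsRatio_denom_of_norm_lt_one hq hx ▸ one_ne_zero)

lemma norm_pottsRatio_lt_one {x : K} (hθ : ‖θ‖ < 1) (hx : ‖θ + q‖ < ‖x - 1‖) :
    ‖pottsRatio θ q x‖ < 1 := by
  have hpos : 0 < ‖x - 1‖ := (norm_nonneg _).trans_lt hx
  rw [pottsRatio, norm_div, norm_pottsRatio_denom hx, div_lt_one hpos,
    show θ * x + q = θ * (x - 1) + (θ + q) by ring]
  refine (IsUltrametricDist.norm_add_le_max _ _).trans_lt (max_lt ?_ hx)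
  rw [norm_mul]
  exact mul_lt_of_lt_one_left hpos hθ

lemma norm_pottsMap_lt_one {k : ℕ} {x : K} (hk : k ≠ 0) (hθ : ‖θ‖ < 1)
    (hx : ‖θ + q‖ < ‖x - 1‖) : ‖pottsMap k θ q x‖ < 1 := by
  rw [pottsMap, norm_pow]
  exact pow_lt_one₀ (norm_nonneg _) (norm_pottsRatio_lt_one hθ hx) hk

lemma lipschitzOnWith_pottsMap (k : ℕ) (hθ : ‖θ‖ < 1) (hq : ‖θ + q‖ < 1) :
    LipschitzOnWith ‖θ + q‖₊ (pottsMap k θ q) (ball 0 1) := by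
  refine LipschitzOnWith.of_dist_le_mul fun x hx y hy => ?_
  rw [mem_ball_zero_iff] at hx hy
  have ratio_le_one {z : K} (hz : ‖z‖ < 1) : ‖pottsRatio θ q z‖ ≤ 1 :=
    (norm_pottsRatio_lt_one hθ (hq.trans_le (one_le_norm_sub_one hz.ne))).le
  rw [dist_eq_norm, dist_eq_norm, coe_nnnorm]
  calc ‖pottsMap k θ q x - pottsMap k θ q y‖
      ≤ ‖pottsRatio θ q x - pottsRatio θ q y‖ :=
        norm_pow_sub_pow_le_norm_sub (ratio_le_one hx) (ratio_le_one hy) k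
    _ = ‖θ + q‖ * ‖x - y‖ := by
        simp only [pottsRatio_sub_pottsRatio (pottsRatio_denom_ne_zero hq hx)
          (pottsRatio_denom_ne_zero hq hy), norm_div, norm_mul, norm_sub_one_eq_one hθ,
          norm_pottsRatio_denom_of_norm_lt_one hq hx, norm_pottsRatio_denom_of_norm_lt_one hq hy,
          one_mul, div_one]

theorem stmt_10_general {k : ℕ} {x₁ x : K} (hk : k ≠ 0) (hθ : ‖θ‖ < 1) (hq : ‖θ + q‖ < 1)
    (hfix : IsFixedPt (pottsMap k θ q) x₁) (hx₁ : ‖x₁‖ < 1)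
    (hx : ‖x‖ ≠ 1 ∨ ‖θ + q‖ < ‖x - 1‖) :
    Tendsto (fun n => (pottsMap k θ q)^[n] x) atTop (𝓝 x₁) := by
  have mapsTo_ball : MapsTo (pottsMap k θ q) (ball 0 1) (ball 0 1) := fun y hy =>
    mem_ball_zero_iff.2 <| norm_pottsMap_lt_one hk hθ <|
      hq.trans_le (one_le_norm_sub_one (mem_ball_zero_iff.1 hy).ne)
  have image_mem_ball : pottsMap k θ q x ∈ ball 0 1 :=
    mem_ball_zero_iff.2 <| norm_pottsMap_lt_one hk hθ <|
      hx.elim (fun h => hq.trans_le (one_le_norm_sub_one h)) id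
  refine (tendsto_add_atTop_iff_nat 1).1 ?_
  exact tendsto_iterate_of_lipschitzOnWith hq (lipschitzOnWith_pottsMap k hθ hq) mapsTo_ball
    (mem_ball_zero_iff.2 hx₁) hfix image_mem_ball

end UltrametricField

theorem stmt_10 (p : ℕ) [Fact p.Prime] (hp2 : p ≠ 2)
    (q : ℕ) (hq : 2 ≤ q) (hpq : p ∣ q)
    (N : ℕ) (hN : 1 ≤ N) (θ : ℚ_[p]) (hθ : θ = (p : ℚ_[p]) ^ N)
    (hθq : ‖θ‖ ≤ ‖(q : ℚ_[p])‖ ^ 2)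
    (x₁ : ℚ_[p])
    (h₁ : x₁ ^ 2 + (2 * θ - θ ^ 2 + 2 * q - 1) * x₁ + q ^ 2 = 0)
    (hn₁ : ‖x₁‖ = ‖(q : ℚ_[p])‖ ^ 2)
    (f : ℚ_[p] → ℚ_[p])
    (hf : f = fun x => ((θ * x + q) / (x + θ + q - 1)) ^ 2)
    (x : ℚ_[p])
    (hx : ‖x‖ ≠ 1 ∨ (‖x‖ = 1 ∧ ‖(q : ℚ_[p])‖ < ‖x - 1‖)) :
    Filter.Tendsto (fun n => f^[n] x) Filter.atTop (nhds x₁) := by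
  subst hf
  have hq_lt : ‖(q : ℚ_[p])‖ < 1 := Padic.norm_natCast_lt_one_iff.2 hpq
  have hθ_le : ‖θ‖ ≤ ‖(q : ℚ_[p])‖ :=
    hθq.trans (pow_le_of_le_one (norm_nonneg _) hq_lt.le two_ne_zero)
  have hx₁_lt : ‖x₁‖ < 1 := hn₁.trans_lt (pow_lt_one₀ (norm_nonneg _) hq_lt two_ne_zero)
  have hθq_le : ‖θ + q‖ ≤ ‖(q : ℚ_[p])‖ :=
    (IsUltrametricDist.norm_add_le_max _ _).trans (max_le hθ_le le_rfl)
  have hθq_lt : ‖θ + q‖ < 1 := hθq_le.trans_lt hq_lt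
  have hfix : IsFixedPt (pottsMap 2 θ (q : ℚ_[p])) x₁ :=
    (isFixedPt_pottsMap_two_iff (pottsRatio_denom_ne_zero hθq_lt hx₁_lt)).2 (Or.inr h₁)
  exact stmt_10_general two_ne_zero (hθ_le.trans_lt hq_lt) hθq_lt hfix hx₁_lt
    (hx.imp_right fun h => hθq_le.trans_lt h.2)
end

section
/- Let p be an odd prime, let q ≥ 2 be an integer divisible by p, let N ≥ 1 be an integer, set θ = p^N ∈ ℚ_p, and assume ‖θ‖_p ≤ ‖q‖_p². Define g : ℚ_p → ℚ_p by g(x) = (θx + q)/(x + θ + q − 1). Then: (i) for every x ∈ ℚ_p with ‖x‖_p ≠ 1 one has ‖g(x)‖_p ≤ max{‖q‖_p, ‖θ‖_p} (in particular ‖g(x)‖_p < 1); (ii) for every x ∈ ℚ_p, if ‖g(x)‖_p > 1 then ‖x‖_p = 1. -/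
/-!
The pole of the linear fractional map `x ↦ (a * x + b) / (x + c)` lies on the sphere `‖x‖ = ‖c‖`.
Off this sphere the ultrametric inequality is an equality for the denominator,
`‖x + c‖ = max ‖x‖ ‖c‖`, and comparing `‖a * x‖` with `‖x‖` and `‖b‖` with `‖c‖` bounds the quotient
by `max ‖a‖ (‖b‖ / ‖c‖)`. For the Potts map, `c = θ + q - 1` has norm `1` because `θ` and `q` are
small.
-/

theorem norm_sub_eq_right_of_norm_lt {S : Type*} [SeminormedAddGroup S] [IsUltrametricDist S]
    {x y : S} (h : ‖x‖ < ‖y‖) : ‖x - y‖ = ‖y‖ := by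
  have hne : ‖x‖ ≠ ‖-y‖ := (norm_neg y).symm ▸ h.ne
  rw [sub_eq_add_neg, IsUltrametricDist.norm_add_eq_max_of_norm_ne_norm hne, norm_neg,
    max_eq_right h.le]

section LinearFractional

variable {K : Type*} [NormedDivisionRing K] [IsUltrametricDist K]

theorem norm_linear_fractional_le {a b c x : K} (hc : c ≠ 0) (hx : ‖x‖ ≠ ‖c‖) :
    ‖(a * x + b) / (x + c)‖ ≤ max ‖a‖ (‖b‖ / ‖c‖) := by
  have hc_pos : 0 < ‖c‖ := norm_pos_iff.2 hc
  have denominator_norm : ‖x + c‖ = max ‖x‖ ‖c‖ :=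
    IsUltrametricDist.norm_add_eq_max_of_norm_ne_norm hx
  rw [norm_div, denominator_norm, div_le_iff₀ (lt_max_of_lt_right hc_pos)]
  calc
    ‖a * x + b‖ ≤ max ‖a * x‖ ‖b‖ := IsUltrametricDist.norm_add_le_max _ _
    _ = max (‖a‖ * ‖x‖) (‖b‖ / ‖c‖ * ‖c‖) := by
      rw [norm_mul, div_mul_cancel₀ _ hc_pos.ne']
    _ ≤ max ‖a‖ (‖b‖ / ‖c‖) * max ‖x‖ ‖c‖ :=
      max_le (by gcongr <;> exact le_max_left _ _) (by gcongr <;> exact le_max_right _ _)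

theorem stmt_11_general {θ q : K} (hθ : ‖θ‖ < 1) (hq : ‖q‖ < 1) {g : K → K}
    (hg : g = fun x => (θ * x + q) / (x + θ + q - 1)) :
    (∀ x : K, ‖x‖ ≠ 1 → ‖g x‖ ≤ max ‖q‖ ‖θ‖ ∧ ‖g x‖ < 1) ∧
    (∀ x : K, 1 < ‖g x‖ → ‖x‖ = 1) := by
  have sum_norm_lt : ‖θ + q‖ < ‖(1 : K)‖ :=
    (IsUltrametricDist.norm_add_le_max θ q).trans_lt (norm_one (α := K) ▸ max_lt hθ hq)
  have shift_norm : ‖θ + q - 1‖ = 1 :=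
    (norm_sub_eq_right_of_norm_lt sum_norm_lt).trans norm_one
  have shift_ne_zero : θ + q - 1 ≠ 0 := norm_ne_zero_iff.1 (shift_norm ▸ one_ne_zero)
  have norm_g_le (x : K) (hx : ‖x‖ ≠ 1) : ‖g x‖ ≤ max ‖q‖ ‖θ‖ := by
    have hgx : g x = (θ * x + q) / (x + (θ + q - 1)) := by
      simp only [hg, add_assoc, add_sub_assoc]
    simpa only [hgx, shift_norm, div_one, max_comm ‖θ‖] using
      norm_linear_fractional_le (a := θ) (b := q) shift_ne_zero (shift_norm.symm ▸ hx)
  have norm_g_lt_one (x : K) (hx : ‖x‖ ≠ 1) : ‖g x‖ < 1 :=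
    (norm_g_le x hx).trans_lt (max_lt hq hθ)
  exact ⟨fun x hx => ⟨norm_g_le x hx, norm_g_lt_one x hx⟩,
    fun x hgx => by_contra fun hx => hgx.not_gt (norm_g_lt_one x hx)⟩

end LinearFractional

theorem stmt_11 (p : ℕ) [Fact p.Prime] (hp2 : p ≠ 2)
    (q : ℕ) (hq : 2 ≤ q) (hpq : p ∣ q)
    (N : ℕ) (hN : 1 ≤ N) (θ : ℚ_[p]) (hθ : θ = (p : ℚ_[p]) ^ N)
    (hθq : ‖θ‖ ≤ ‖(q : ℚ_[p])‖ ^ 2)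
    (g : ℚ_[p] → ℚ_[p])
    (hg : g = fun x => (θ * x + q) / (x + θ + q - 1)) :
    (∀ x : ℚ_[p], ‖x‖ ≠ 1 → ‖g x‖ ≤ max ‖(q : ℚ_[p])‖ ‖θ‖ ∧ ‖g x‖ < 1) ∧
    (∀ x : ℚ_[p], 1 < ‖g x‖ → ‖x‖ = 1) := by
  have hq_lt : ‖(q : ℚ_[p])‖ < 1 := Padic.norm_natCast_lt_one_iff.2 hpq
  exact stmt_11_general (hθq.trans_lt (pow_lt_one₀ (norm_nonneg _) hq_lt two_ne_zero)) hq_lt hg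
end

section
/- Let p be an odd prime, let q ≥ 1 be an integer, let M ≥ 1 be an integer, and set θ = p^{−M} ∈ ℚ_p, so ‖θ‖_p > 1. Let x₁ and x₂ be roots in ℚ_p of x² + (2θ − θ² + 2q − 1)x + q² = 0 with ‖x₁‖_p = ‖θ‖_p² and ‖x₂‖_p = (‖q‖_p/‖θ‖_p)². Let g(x) = (θx + q)/(x + θ + q − 1), and let h be a function assigning to every finite word w over the alphabet {0,1} an element h(w) ∈ ℚ_p such that h(w) = g(h(w·0)) · g(h(w·1)) for every word w (where w·i denotes w with the letter i appended). Then: (i) if ‖h(w)‖_p < 1 for every word w, then h(w) = x₂ for every word w; (ii) if ‖h(w)‖_p > 1 for every word w, then h(w) = x₁ for every word w. -/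
/-!
In an ultrametric field with `‖q‖ ≤ 1 < ‖θ‖`, two values of `g` differ by
`(θ - 1) (θ + q) (x - y) / ((x + θ + q - 1) (y + θ + q - 1))`, whose first two factors have norm
`‖θ‖` each. So `g` is an isometry on the open ball of radius `‖θ‖`, and it contracts by
`‖θ‖⁻²`, with values of norm `‖θ‖`, on `{x | ‖θ‖² ≤ ‖x‖}`.

Where `‖g‖ ≤ B` and `g` is `L`-Lipschitz, the distance between two solutions of the recursion at a
vertex is at most `B * L` times their distance at one of its successors, so there is only one
solution if `B * L < 1`. On the ball of radius `r < 1` one may take `B = max r ‖θ‖⁻¹`, `L = 1`.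
For a solution of norm at least `r > 1`, the infimum `m` of the norms satisfies
`min ‖θ‖ m ^ 2 ≤ m`; as `m > 1` this forces `‖θ‖ < m`, hence `‖θ‖² ≤ m`, and one may take
`B = ‖θ‖`, `L = ‖θ‖⁻²`. The constant functions `x₁` and `x₂` are such solutions.
-/

lemma nonpos_of_forall_exists_le_mul {ι : Type*} {d : ι → ℝ} {c : ℝ} (hc₀ : 0 ≤ c) (hc₁ : c < 1)
    (hd : BddAbove (Set.range d)) (hstep : ∀ i, ∃ j, d i ≤ c * d j) (i : ι) : d i ≤ 0 := by
  have : Nonempty ι := ⟨i⟩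
  have hsup : ⨆ j, d j ≤ c * ⨆ j, d j := ciSup_le fun k ↦ by
    obtain ⟨j, hj⟩ := hstep k
    exact hj.trans (mul_le_mul_of_nonneg_left (le_ciSup hd j) hc₀)
  have hsup_nonpos : ⨆ j, d j ≤ 0 := by nlinarith
  exact (le_ciSup hd i).trans hsup_nonpos

lemma norm_add_eq_left_of_norm_lt {E : Type*} [SeminormedAddGroup E] [IsUltrametricDist E]
    {a b : E} (hab : ‖b‖ < ‖a‖) : ‖a + b‖ = ‖a‖ := by
  rw [IsUltrametricDist.norm_add_eq_max_of_norm_ne_norm hab.ne', max_eq_left hab.le]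

lemma norm_mul_sub_mul_le {R : Type*} [SeminormedRing R] [IsUltrametricDist R] {a b c d : R}
    {B : ℝ} (hb : ‖b‖ ≤ B) (hc : ‖c‖ ≤ B) :
    ‖a * b - c * d‖ ≤ B * max ‖a - c‖ ‖b - d‖ := by
  have hB : 0 ≤ B := (norm_nonneg b).trans hb
  calc ‖a * b - c * d‖ = ‖(a - c) * b + c * (b - d)‖ := by congr 1; noncomm_ring
    _ ≤ max (‖a - c‖ * ‖b‖) (‖c‖ * ‖b - d‖) :=
      (IsUltrametricDist.norm_add_le_max _ _).trans
        (max_le_max (norm_mul_le _ _) (norm_mul_le _ _))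
    _ ≤ max (‖a - c‖ * B) (B * ‖b - d‖) := by gcongr
    _ = B * max ‖a - c‖ ‖b - d‖ := by rw [mul_comm ‖a - c‖, mul_max_of_nonneg _ _ hB]

lemma norm_sub_one_le_one {R : Type*} [SeminormedRing R] [NormOneClass R] [IsUltrametricDist R]
    {a : R} (ha : ‖a‖ ≤ 1) : ‖a - 1‖ ≤ 1 := by
  rw [sub_eq_add_neg]
  exact (IsUltrametricDist.norm_add_le_max _ _).trans (max_le ha (by rw [norm_neg, norm_one]))

lemma exists_one_lt_forall_le_norm {K : Type*} [NormedDivisionRing K]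
    (hgap : ∃ r < 1, ∀ x : K, ‖x‖ < 1 → ‖x‖ ≤ r) :
    ∃ r > 1, ∀ x : K, 1 < ‖x‖ → r ≤ ‖x‖ := by
  obtain ⟨r, hr, hgap⟩ := hgap
  -- If the norm is trivial, `r` may be nonpositive.
  have hs₀ : 0 < max r 2⁻¹ := lt_max_of_lt_right (by norm_num)
  have hs₁ : max r 2⁻¹ < 1 := max_lt hr (by norm_num)
  refine ⟨(max r 2⁻¹)⁻¹, (one_lt_inv₀ hs₀).2 hs₁, fun x hx ↦ ?_⟩
  refine inv_le_of_inv_le₀ (one_pos.trans hx) ?_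
  rw [← norm_inv]
  exact (hgap _ (by simpa only [norm_inv] using inv_lt_one_of_one_lt₀ hx)).trans (le_max_left _ _)

section Padic

variable {p : ℕ} [Fact p.Prime]

lemma exists_lt_one_forall_padic_norm_le : ∃ r < 1, ∀ x : ℚ_[p], ‖x‖ < 1 → ‖x‖ ≤ r := by
  have hp : 1 < (p : ℝ) := mod_cast (Fact.out : p.Prime).one_lt
  refine ⟨(p : ℝ) ^ (-1 : ℤ), zpow_lt_one_of_neg₀ hp neg_one_lt_zero, fun x hx ↦ ?_⟩
  rwa [Padic.norm_le_pow_iff_norm_lt_pow_add_one, neg_add_cancel, zpow_zero]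

lemma one_lt_padic_norm_inv_pow {M : ℕ} (hM : M ≠ 0) : 1 < ‖((p : ℚ_[p]) ^ M)⁻¹‖ := by
  have hp : (p : ℚ_[p]) ≠ 0 := Nat.cast_ne_zero.2 (Fact.out : p.Prime).ne_zero
  rw [norm_inv, norm_pow, one_lt_inv₀ (pow_pos (norm_pos_iff.2 hp) M)]
  exact pow_lt_one₀ (norm_nonneg _) Padic.norm_p_lt_one hM

end Padic

namespace Potts

/-- The compatibility equation `f(w) = g(f(w0)) g(f(w1))` for a boundary function `f` on the
vertices of the rooted binary tree, encoded as finite words whose last letter is the most recent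
choice of successor. -/
def IsCompatible {K : Type*} [Mul K] (g : K → K) (f : List (Fin 2) → K) : Prop :=
  ∀ w, f w = g (f (w ++ [0])) * g (f (w ++ [1]))

/-- The boundary map `x ↦ (θ x + q) / (x + θ + q - 1)` of the `(q + 1)`-state Potts model on its
invariant line, with `q` allowed to be any element of the field, and with value `0` where the
denominator vanishes. -/
def boundaryMap {K : Type*} [Field K] (θ q x : K) : K := (θ * x + q) / (x + θ + q - 1)

section Compatibility

variable {K : Type*} [NormedRing K] {g : K → K} {f f' : List (Fin 2) → K}
  {S : Set K} {B : ℝ} {L : NNReal}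

lemma IsCompatible.norm_le_mul_self (hf : IsCompatible g f) (hfS : ∀ w, f w ∈ S)
    (hgB : ∀ x ∈ S, ‖g x‖ ≤ B) (w : List (Fin 2)) : ‖f w‖ ≤ B * B := by
  rw [hf w]
  exact norm_mul_le_of_le (hgB _ (hfS _)) (hgB _ (hfS _))

theorem IsCompatible.eq_of_lipschitzOnWith [IsUltrametricDist K]
    (hf : IsCompatible g f) (hf' : IsCompatible g f') (hfS : ∀ w, f w ∈ S)
    (hfS' : ∀ w, f' w ∈ S) (hgB : ∀ x ∈ S, ‖g x‖ ≤ B) (hgL : LipschitzOnWith L g S)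
    (hBL : B * L < 1) : f = f' := by
  have hB : 0 ≤ B := (norm_nonneg _).trans (hgB _ (hfS []))
  have hbdd : BddAbove (Set.range fun w ↦ ‖f w - f' w‖) := by
    refine ⟨B * B + B * B, ?_⟩
    rintro _ ⟨w, rfl⟩
    exact norm_sub_le_of_le (hf.norm_le_mul_self hfS hgB w) (hf'.norm_le_mul_self hfS' hgB w)
  have hstep (w) : ∃ v, ‖f w - f' w‖ ≤ B * L * ‖f v - f' v‖ := by
    have hle : ‖f w - f' w‖ ≤
        B * L * max ‖f (w ++ [0]) - f' (w ++ [0])‖ ‖f (w ++ [1]) - f' (w ++ [1])‖ := by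
      rw [hf w, hf' w, mul_assoc, mul_max_of_nonneg _ _ L.coe_nonneg]
      refine (norm_mul_sub_mul_le (hgB _ (hfS _)) (hgB _ (hfS' _))).trans ?_
      gcongr <;> exact hgL.norm_sub_le (hfS _) (hfS' _)
    rcases max_choice ‖f (w ++ [0]) - f' (w ++ [0])‖ ‖f (w ++ [1]) - f' (w ++ [1])‖
      with hmax | hmax <;> exact ⟨_, hmax ▸ hle⟩
  funext w
  have hw := nonpos_of_forall_exists_le_mul (mul_nonneg hB L.coe_nonneg) hBL hbdd hstep w
  exact sub_eq_zero.1 (norm_le_zero_iff.1 hw)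

end Compatibility

lemma mul_sq_eq_sq_of_root {R : Type*} [CommRing R] {θ q x : R}
    (hx : x ^ 2 + (2 * θ - θ ^ 2 + 2 * q - 1) * x + q ^ 2 = 0) :
    x * (x + θ + q - 1) ^ 2 = (θ * x + q) ^ 2 := by
  linear_combination (x - 1) * hx

section BoundaryMap

variable {K : Type*} [Field K] {θ q x y : K}

lemma isCompatible_const_of_root (hden : x + θ + q - 1 ≠ 0)
    (hx : x ^ 2 + (2 * θ - θ ^ 2 + 2 * q - 1) * x + q ^ 2 = 0) :
    IsCompatible (boundaryMap θ q) fun _ ↦ x := fun _ ↦ by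
  rw [boundaryMap, ← sq, div_pow, eq_div_iff (pow_ne_zero 2 hden), mul_sq_eq_sq_of_root hx]

lemma boundaryMap_sub_boundaryMap (hx : x + θ + q - 1 ≠ 0) (hy : y + θ + q - 1 ≠ 0) :
    boundaryMap θ q x - boundaryMap θ q y =
      (θ - 1) * (θ + q) * (x - y) / ((x + θ + q - 1) * (y + θ + q - 1)) := by
  rw [boundaryMap, boundaryMap, div_sub_div _ _ hx hy]
  ring

end BoundaryMap

section Norms

variable {K : Type*} [NormedField K] [IsUltrametricDist K] {θ q x y : K} {r : ℝ}

lemma norm_add_sub_one (hθ : 1 < ‖θ‖) (hq : ‖q‖ ≤ 1) : ‖θ + (q - 1)‖ = ‖θ‖ :=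
  norm_add_eq_left_of_norm_lt ((norm_sub_one_le_one hq).trans_lt hθ)

lemma norm_denom_le_max (hθ : 1 < ‖θ‖) (hq : ‖q‖ ≤ 1) :
    ‖x + θ + q - 1‖ ≤ max ‖x‖ ‖θ‖ := by
  rw [add_assoc, add_sub_assoc, add_sub_assoc, ← norm_add_sub_one hθ hq]
  exact IsUltrametricDist.norm_add_le_max _ _

lemma norm_denom_of_norm_lt (hθ : 1 < ‖θ‖) (hq : ‖q‖ ≤ 1) (hx : ‖x‖ < ‖θ‖) :
    ‖x + θ + q - 1‖ = ‖θ‖ := by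
  rw [add_assoc, add_sub_assoc, add_sub_assoc, add_comm,
    norm_add_eq_left_of_norm_lt (by rwa [norm_add_sub_one hθ hq]), norm_add_sub_one hθ hq]

lemma norm_denom_of_lt_norm (hθ : 1 < ‖θ‖) (hq : ‖q‖ ≤ 1) (hx : ‖θ‖ < ‖x‖) :
    ‖x + θ + q - 1‖ = ‖x‖ := by
  rw [add_assoc, add_sub_assoc, add_sub_assoc,
    norm_add_eq_left_of_norm_lt (by rwa [norm_add_sub_one hθ hq])]

lemma norm_numer_of_one_lt_norm (hθ : 1 < ‖θ‖) (hq : ‖q‖ ≤ 1) (hx : 1 < ‖x‖) :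
    ‖θ * x + q‖ = ‖θ‖ * ‖x‖ := by
  have hlt : ‖q‖ < ‖θ * x‖ := by
    rw [norm_mul]
    exact hq.trans_lt (one_lt_mul_of_lt_of_le hθ hx.le)
  rw [norm_add_eq_left_of_norm_lt hlt, norm_mul]

lemma norm_boundaryMap_le_of_norm_lt (hθ : 1 < ‖θ‖) (hq : ‖q‖ ≤ 1) (hx : ‖x‖ < ‖θ‖) :
    ‖boundaryMap θ q x‖ ≤ max ‖x‖ ‖θ‖⁻¹ := by
  have hθ₀ : 0 < ‖θ‖ := one_pos.trans hθ
  rw [boundaryMap, norm_div, norm_denom_of_norm_lt hθ hq hx, div_le_iff₀ hθ₀,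
    max_mul_of_nonneg _ _ hθ₀.le, inv_mul_cancel₀ hθ₀.ne', mul_comm, ← norm_mul]
  exact (IsUltrametricDist.norm_add_le_max _ _).trans (max_le_max le_rfl hq)

lemma norm_boundaryMap_of_lt_norm (hθ : 1 < ‖θ‖) (hq : ‖q‖ ≤ 1) (hx : ‖θ‖ < ‖x‖) :
    ‖boundaryMap θ q x‖ = ‖θ‖ := by
  have hx₁ : 1 < ‖x‖ := hθ.trans hx
  rw [boundaryMap, norm_div, norm_numer_of_one_lt_norm hθ hq hx₁, norm_denom_of_lt_norm hθ hq hx,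
    mul_div_cancel_right₀ _ (one_pos.trans hx₁).ne']

lemma min_le_norm_boundaryMap (hθ : 1 < ‖θ‖) (hq : ‖q‖ ≤ 1) (hx : 1 < ‖x‖)
    (hgx : boundaryMap θ q x ≠ 0) : min ‖θ‖ ‖x‖ ≤ ‖boundaryMap θ q x‖ := by
  have hden : 0 < ‖x + θ + q - 1‖ := norm_pos_iff.2 (div_ne_zero_iff.1 hgx).2
  rw [boundaryMap, norm_div, norm_numer_of_one_lt_norm hθ hq hx, le_div_iff₀ hden]
  calc min ‖θ‖ ‖x‖ * ‖x + θ + q - 1‖ ≤ min ‖θ‖ ‖x‖ * max ‖θ‖ ‖x‖ := by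
        rw [max_comm]
        gcongr
        exact norm_denom_le_max hθ hq
    _ = ‖θ‖ * ‖x‖ := min_mul_max _ _

lemma norm_boundaryMap_sub (hθ : 1 < ‖θ‖) (hq : ‖q‖ ≤ 1) (hx : x + θ + q - 1 ≠ 0)
    (hy : y + θ + q - 1 ≠ 0) :
    ‖boundaryMap θ q x - boundaryMap θ q y‖ =
      ‖θ‖ ^ 2 * ‖x - y‖ / (‖x + θ + q - 1‖ * ‖y + θ + q - 1‖) := by
  have hsub : ‖θ - 1‖ = ‖θ‖ := by
    rw [sub_eq_add_neg, norm_add_eq_left_of_norm_lt (by rwa [norm_neg, norm_one])]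
  have hadd : ‖θ + q‖ = ‖θ‖ := norm_add_eq_left_of_norm_lt (hq.trans_lt hθ)
  rw [boundaryMap_sub_boundaryMap hx hy, norm_div, norm_mul, norm_mul, norm_mul, hsub, hadd, sq]

lemma lipschitzOnWith_boundaryMap_of_norm_lt (hθ : 1 < ‖θ‖) (hq : ‖q‖ ≤ 1) :
    LipschitzOnWith 1 (boundaryMap θ q) {x | ‖x‖ < ‖θ‖} := by
  have hθ₀ : 0 < ‖θ‖ := one_pos.trans hθ
  refine LipschitzOnWith.of_dist_le_mul fun x hx y hy ↦ le_of_eq ?_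
  have hdx := norm_denom_of_norm_lt hθ hq hx
  have hdy := norm_denom_of_norm_lt hθ hq hy
  rw [dist_eq_norm, dist_eq_norm, norm_boundaryMap_sub hθ hq (norm_pos_iff.1 (hdx ▸ hθ₀))
    (norm_pos_iff.1 (hdy ▸ hθ₀)), hdx, hdy, NNReal.coe_one]
  field_simp

lemma lipschitzOnWith_boundaryMap_of_sq_le_norm (hθ : 1 < ‖θ‖) (hq : ‖q‖ ≤ 1) :
    LipschitzOnWith (‖θ‖₊ ^ 2)⁻¹ (boundaryMap θ q) {x | ‖θ‖ ^ 2 ≤ ‖x‖} := by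
  have hθ₀ : 0 < ‖θ‖ := one_pos.trans hθ
  have hden {x : K} (hx : ‖θ‖ ^ 2 ≤ ‖x‖) : ‖θ‖ ^ 2 ≤ ‖x + θ + q - 1‖ := by
    rwa [norm_denom_of_lt_norm hθ hq ((lt_self_pow₀ hθ one_lt_two).trans_le hx)]
  have hden₀ {x : K} (hx : ‖θ‖ ^ 2 ≤ ‖x‖) : x + θ + q - 1 ≠ 0 :=
    norm_pos_iff.1 ((pow_pos hθ₀ 2).trans_le (hden hx))
  refine LipschitzOnWith.of_dist_le_mul fun x hx y hy ↦ ?_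
  rw [dist_eq_norm, dist_eq_norm, norm_boundaryMap_sub hθ hq (hden₀ hx) (hden₀ hy)]
  calc ‖θ‖ ^ 2 * ‖x - y‖ / (‖x + θ + q - 1‖ * ‖y + θ + q - 1‖)
      ≤ ‖θ‖ ^ 2 * ‖x - y‖ / (‖θ‖ ^ 2 * ‖θ‖ ^ 2) := by
        gcongr
        exacts [hden hx, hden hy]
    _ = (‖θ‖ ^ 2)⁻¹ * ‖x - y‖ := by field_simp

lemma denom_ne_zero_of_root (hθ : 1 < ‖θ‖) (hq : ‖q‖ ≤ 1) (hx₁ : 1 < ‖x‖)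
    (hx : x ^ 2 + (2 * θ - θ ^ 2 + 2 * q - 1) * x + q ^ 2 = 0) : x + θ + q - 1 ≠ 0 := by
  intro hden
  have hnum : θ * x + q = 0 := by
    simpa [hden] using (mul_sq_eq_sq_of_root hx).symm
  have hnorm := norm_numer_of_one_lt_norm hθ hq hx₁
  rw [hnum, norm_zero] at hnorm
  exact (mul_pos (one_pos.trans hθ) (one_pos.trans hx₁)).ne hnorm

variable {f f' : List (Fin 2) → K}

theorem IsCompatible.eq_of_norm_le (hθ : 1 < ‖θ‖) (hq : ‖q‖ ≤ 1) (hr : r < 1)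
    (hf : IsCompatible (boundaryMap θ q) f) (hf' : IsCompatible (boundaryMap θ q) f')
    (hfr : ∀ w, ‖f w‖ ≤ r) (hfr' : ∀ w, ‖f' w‖ ≤ r) : f = f' := by
  have hball {x : K} (hx : ‖x‖ ≤ r) : ‖x‖ < ‖θ‖ := hx.trans_lt (hr.trans hθ)
  have hbound : ∀ x ∈ {x : K | ‖x‖ ≤ r}, ‖boundaryMap θ q x‖ ≤ max r ‖θ‖⁻¹ := fun x hx ↦
    (norm_boundaryMap_le_of_norm_lt hθ hq (hball hx)).trans (max_le_max hx le_rfl)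
  refine hf.eq_of_lipschitzOnWith hf' hfr hfr' hbound
    ((lipschitzOnWith_boundaryMap_of_norm_lt hθ hq).mono fun _ ↦ hball) ?_
  rw [NNReal.coe_one, mul_one]
  exact max_lt hr (inv_lt_one_of_one_lt₀ hθ)

lemma IsCompatible.sq_min_le_norm (hθ : 1 < ‖θ‖) (hq : ‖q‖ ≤ 1) (hr : 1 < r)
    (hf : IsCompatible (boundaryMap θ q) f) (hfr : ∀ w, r ≤ ‖f w‖) (w : List (Fin 2)) :
    min ‖θ‖ r ^ 2 ≤ ‖f w‖ := by
  have hfw : f w ≠ 0 := norm_pos_iff.1 (one_pos.trans (hr.trans_le (hfr w)))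
  have hmin (v) (hv : boundaryMap θ q (f v) ≠ 0) : min ‖θ‖ r ≤ ‖boundaryMap θ q (f v)‖ :=
    (min_le_min_left _ (hfr v)).trans (min_le_norm_boundaryMap hθ hq (hr.trans_le (hfr v)) hv)
  rw [hf w] at hfw ⊢
  rw [norm_mul, sq]
  exact mul_le_mul (hmin _ (left_ne_zero_of_mul hfw)) (hmin _ (right_ne_zero_of_mul hfw))
    (le_min (norm_nonneg _) (one_pos.trans hr).le) (norm_nonneg _)

lemma IsCompatible.sq_le_norm (hθ : 1 < ‖θ‖) (hq : ‖q‖ ≤ 1) (hr : 1 < r)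
    (hf : IsCompatible (boundaryMap θ q) f) (hfr : ∀ w, r ≤ ‖f w‖) (w : List (Fin 2)) :
    ‖θ‖ ^ 2 ≤ ‖f w‖ := by
  have hbdd : BddBelow (Set.range fun v ↦ ‖f v‖) := ⟨0, by rintro _ ⟨v, rfl⟩; exact norm_nonneg _⟩
  set m := ⨅ v, ‖f v‖
  have hm : 1 < m := hr.trans_le (le_ciInf hfr)
  have hle (v) : m ≤ ‖f v‖ := ciInf_le hbdd v
  have hsq (v) : min ‖θ‖ m ^ 2 ≤ ‖f v‖ := hf.sq_min_le_norm hθ hq hm hle v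
  have hθm : ‖θ‖ ≤ m := by
    by_contra! hlt
    have hmm : m ^ 2 ≤ m := le_ciInf fun v ↦ by simpa only [min_eq_right hlt.le] using hsq v
    exact (lt_self_pow₀ hm one_lt_two).not_ge hmm
  simpa only [min_eq_left hθm] using hsq w

theorem IsCompatible.eq_of_le_norm (hθ : 1 < ‖θ‖) (hq : ‖q‖ ≤ 1) (hr : 1 < r)
    (hf : IsCompatible (boundaryMap θ q) f) (hf' : IsCompatible (boundaryMap θ q) f')
    (hfr : ∀ w, r ≤ ‖f w‖) (hfr' : ∀ w, r ≤ ‖f' w‖) : f = f' := by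
  have hbound : ∀ x ∈ {x : K | ‖θ‖ ^ 2 ≤ ‖x‖}, ‖boundaryMap θ q x‖ ≤ ‖θ‖ := fun x hx ↦
    (norm_boundaryMap_of_lt_norm hθ hq ((lt_self_pow₀ hθ one_lt_two).trans_le hx)).le
  refine hf.eq_of_lipschitzOnWith hf' (hf.sq_le_norm hθ hq hr hfr) (hf'.sq_le_norm hθ hq hr hfr')
    hbound (lipschitzOnWith_boundaryMap_of_sq_le_norm hθ hq) ?_
  rw [NNReal.coe_inv, NNReal.coe_pow, coe_nnnorm, ← div_eq_mul_inv,
    div_lt_one (pow_pos (one_pos.trans hθ) 2)]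
  exact lt_self_pow₀ hθ one_lt_two

end Norms

end Potts

open Potts

theorem stmt_19_general {K : Type*} [NormedField K] [IsUltrametricDist K]
    (hgap : ∃ r < 1, ∀ x : K, ‖x‖ < 1 → ‖x‖ ≤ r) {θ q x₁ x₂ : K} (hθ : 1 < ‖θ‖) (hq : ‖q‖ ≤ 1)
    (h₁ : x₁ ^ 2 + (2 * θ - θ ^ 2 + 2 * q - 1) * x₁ + q ^ 2 = 0)
    (h₂ : x₂ ^ 2 + (2 * θ - θ ^ 2 + 2 * q - 1) * x₂ + q ^ 2 = 0)
    (hn₁ : 1 < ‖x₁‖) (hn₂ : ‖x₂‖ < 1) {h : List (Fin 2) → K}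
    (hrec : IsCompatible (boundaryMap θ q) h) :
    ((∀ w, ‖h w‖ < 1) → ∀ w, h w = x₂) ∧ ((∀ w, 1 < ‖h w‖) → ∀ w, h w = x₁) := by
  constructor
  · intro hsmall
    obtain ⟨r, hr, hle⟩ := hgap
    have hden : x₂ + θ + q - 1 ≠ 0 := norm_pos_iff.1 <| by
      rw [norm_denom_of_norm_lt hθ hq (hn₂.trans hθ)]
      exact one_pos.trans hθ
    exact congrFun <| hrec.eq_of_norm_le hθ hq hr (isCompatible_const_of_root hden h₂)
      (fun w ↦ hle _ (hsmall w)) fun _ ↦ hle _ hn₂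
  · intro hlarge
    obtain ⟨r, hr, hle⟩ := exists_one_lt_forall_le_norm hgap
    have hden : x₁ + θ + q - 1 ≠ 0 := denom_ne_zero_of_root hθ hq hn₁ h₁
    exact congrFun <| hrec.eq_of_le_norm hθ hq hr (isCompatible_const_of_root hden h₁)
      (fun w ↦ hle _ (hlarge w)) fun _ ↦ hle _ hn₁

theorem stmt_19 (p : ℕ) [Fact p.Prime] (hp2 : p ≠ 2)
    (q : ℕ) (hq : 1 ≤ q) (M : ℕ) (hM : 1 ≤ M)
    (θ : ℚ_[p]) (hθ : θ = ((p : ℚ_[p]) ^ M)⁻¹)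
    (x₁ x₂ : ℚ_[p])
    (h₁ : x₁ ^ 2 + (2 * θ - θ ^ 2 + 2 * q - 1) * x₁ + q ^ 2 = 0)
    (h₂ : x₂ ^ 2 + (2 * θ - θ ^ 2 + 2 * q - 1) * x₂ + q ^ 2 = 0)
    (hn₁ : ‖x₁‖ = ‖θ‖ ^ 2) (hn₂ : ‖x₂‖ = (‖(q : ℚ_[p])‖ / ‖θ‖) ^ 2)
    (g : ℚ_[p] → ℚ_[p])
    (hg : g = fun x => (θ * x + q) / (x + θ + q - 1))
    (h : List (Fin 2) → ℚ_[p])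
    (hrec : ∀ w : List (Fin 2), h w = g (h (w ++ [0])) * g (h (w ++ [1]))) :
    ((∀ w : List (Fin 2), ‖h w‖ < 1) → ∀ w : List (Fin 2), h w = x₂) ∧
    ((∀ w : List (Fin 2), 1 < ‖h w‖) → ∀ w : List (Fin 2), h w = x₁) := by
  have hθ₁ : 1 < ‖θ‖ := hθ ▸ one_lt_padic_norm_inv_pow (by lia)
  have hq₁ : ‖(q : ℚ_[p])‖ ≤ 1 := IsUltrametricDist.norm_natCast_le_one _ q
  have hx₁ : 1 < ‖x₁‖ := hn₁ ▸ one_lt_pow₀ hθ₁ two_ne_zero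
  have hx₂ : ‖x₂‖ < 1 := hn₂ ▸ pow_lt_one₀ (by positivity)
    ((div_lt_one (one_pos.trans hθ₁)).2 (hq₁.trans_lt hθ₁)) two_ne_zero
  subst hg
  exact stmt_19_general exists_lt_one_forall_padic_norm_le hθ₁ hq₁ h₁ h₂ hx₁ hx₂ hrec
end
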